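/- Let (M,E,η) be a factorable monoid. Then the rewriting system associated with η is strongly minimal, the evaluation map E*/↔_R → M induced by sending each letter to itself is an isomorphism of monoids, and every ↔_R-equivalence class of words over E contains exactly one irreducible word. -/

import Mathlib

/-- The word length of `m` with respect to the generating set `E`:
the least `n` such that `m` is a product of `n` elements of `E`. -/
noncomputable def wordLength {M : Type*} [Monoid M] (E : Set M) (m : M) : ℕ :=
  sInf {n | ∃ l : List M, (∀ x ∈ l, x ∈ E) ∧ l.length = n ∧ l.prod = m}

/-- `E` is a generating set of the monoid `M`. -/
def IsGenSet {M : Type*} [Monoid M] (E : Set M) : Prop :=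
  ∀ m : M, ∃ l : List M, (∀ x ∈ l, x ∈ E) ∧ l.prod = m

/-- The pair `(a, b)` is geodesic with respect to `E`. -/
noncomputable def Geodesic {M : Type*} [Monoid M] (E : Set M) (a b : M) : Prop :=
  wordLength E (a * b) = wordLength E a + wordLength E b

/-- A factorization map `η = (η̄, η′)` on `(M, E)`. -/
noncomputable def IsFactorizationMap {M : Type*} [Monoid M] (E : Set M)
    (η : M → M × M) : Prop :=
  (∀ m, (η m).1 * (η m).2 = m) ∧
  (∀ m, wordLength E m = wordLength E (η m).1 + wordLength E (η m).2) ∧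
  (∀ m, m ≠ 1 → (η m).2 ∈ E) ∧
  η 1 = (1, 1)

/-- The map `f₁ : M³ → M³` applying `η` to the product of the two right entries,
with triples written `(x₃, x₂, x₁)`. -/
def f1 {M : Type*} [Monoid M] (η : M → M × M) (p : M × M × M) : M × M × M :=
  (p.1, η (p.2.1 * p.2.2))

/-- The map `f₂ : M³ → M³` applying `η` to the product of the two left entries. -/
def f2 {M : Type*} [Monoid M] (η : M → M × M) (p : M × M × M) : M × M × M :=
  ((η (p.1 * p.2.1)).1, (η (p.1 * p.2.1)).2, p.2.2)

/-- The sum of the word lengths of the entries of a triple. -/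
noncomputable def tnorm {M : Type*} [Monoid M] (E : Set M) (p : M × M × M) : ℕ :=
  wordLength E p.1 + wordLength E p.2.1 + wordLength E p.2.2

/-- `η` is a factorability structure on `(M, E)`: it is a factorization map and the
three maps `f₁f₂f₁f₂`, `f₂f₁f₂`, `f₂f₁f₂f₁ : M³ → M³` are equal in the graded sense. -/
noncomputable def IsFactorable {M : Type*} [Monoid M] (E : Set M) (η : M → M × M) : Prop :=
  IsFactorizationMap E η ∧
  ∀ p : M × M × M,
    (f1 η (f2 η (f1 η (f2 η p))) = f2 η (f1 η (f2 η p)) ∧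
     f2 η (f1 η (f2 η p)) = f2 η (f1 η (f2 η (f1 η p)))) ∨
    (tnorm E (f1 η (f2 η (f1 η (f2 η p)))) < tnorm E p ∧
     tnorm E (f2 η (f1 η (f2 η p))) < tnorm E p ∧
     tnorm E (f2 η (f1 η (f2 η (f1 η p)))) < tnorm E p)

/-- `η` is a weak factorability structure on `(M, E)`. -/
noncomputable def IsWeaklyFactorable {M : Type*} [Monoid M] (E : Set M)
    (η : M → M × M) : Prop :=
  IsFactorizationMap E η ∧
  ∀ x : M, ∀ t ∈ E,
    Geodesic E (η x).2 t →
    Geodesic E (η x).1 (η ((η x).2 * t)).1 →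
    Geodesic E x t ∧
    (η (x * t)).2 = (η ((η x).2 * t)).2 ∧
    (η (x * t)).1 = (η x).1 * (η ((η x).2 * t)).1

/-- `η` satisfies the recognition principle. -/
def RecognitionPrinciple {M : Type*} [Monoid M] (E : Set M) (η : M → M × M) : Prop :=
  ∀ m : M, ∀ a ∈ E, (η (m * a) = (m, a) ↔ η ((η m).2 * a) = ((η m).2, a))


attribute [local instance] Classical.propDecidable

/-- The right-hand side of the rewriting rule associated with the unstable pair `(x, y)`:
the word obtained from the pair `(η̄(x·y), η′(x·y))` by deleting entries equal to `1`. -/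
noncomputable def ruleRHS {M : Type*} [Monoid M] (η : M → M × M) (x y : M) : List M :=
  (if (η (x * y)).1 = 1 then [] else [(η (x * y)).1]) ++
  (if (η (x * y)).2 = 1 then [] else [(η (x * y)).2])

/-- One rewriting step of the rewriting system associated with the factorability
structure `η` on `(M, E)`: some occurrence of an unstable pair `(x, y)` of generators is
replaced by the corresponding right-hand side. -/
noncomputable def Step {M : Type*} [Monoid M] (E : Set M) (η : M → M × M)
    (w z : List M) : Prop :=
  ∃ (u v : List M) (x y : M), x ∈ E ∧ y ∈ E ∧ η (x * y) ≠ (x, y) ∧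
    w = u ++ [x, y] ++ v ∧ z = u ++ ruleRHS η x y ++ v

/-- A word is irreducible if no rewriting rule applies to it. -/
noncomputable def Irr {M : Type*} [Monoid M] (E : Set M) (η : M → M × M)
    (w : List M) : Prop :=
  ¬ ∃ z, Step E η w z

/-- The rewriting system associated with `η` is strongly minimal: every single letter is
irreducible, the right side of every rule is irreducible, and the left side of every
rule is irreducible with respect to the remaining rules. -/
noncomputable def StronglyMinimal {M : Type*} [Monoid M] (E : Set M)
    (η : M → M × M) : Prop :=
  (∀ s ∈ E, Irr E η [s]) ∧
  (∀ x ∈ E, ∀ y ∈ E, η (x * y) ≠ (x, y) → Irr E η (ruleRHS η x y)) ∧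
  (∀ x ∈ E, ∀ y ∈ E, η (x * y) ≠ (x, y) →
    ¬ ∃ (u v : List M) (x' y' : M), x' ∈ E ∧ y' ∈ E ∧ η (x' * y') ≠ (x', y') ∧
        (x', y') ≠ (x, y) ∧ [x, y] = u ++ [x', y'] ++ v)

/-- The rewriting system associated with `η` is noetherian: there is no infinite chain
of rewriting steps between words over the alphabet `E`. -/
noncomputable def Noetherian {M : Type*} [Monoid M] (E : Set M)
    (η : M → M × M) : Prop :=
  ¬ ∃ f : ℕ → List M, (∀ k, ∀ a ∈ f k, a ∈ E) ∧ ∀ k, Step E η (f k) (f (k + 1))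

/-- The rewriting system associated with `η` is convergent: it is noetherian and each
`↔`-equivalence class of words over `E` contains exactly one irreducible word. -/
noncomputable def Convergent {M : Type*} [Monoid M] (E : Set M)
    (η : M → M × M) : Prop :=
  Noetherian E η ∧
  ∀ w : List M, (∀ a ∈ w, a ∈ E) →
    ∃! z : List M, (∀ a ∈ z, a ∈ E) ∧ Relation.EqvGen (Step E η) w z ∧ Irr E η z

/-- The rewriting system associated with `η` is complete. -/
noncomputable def Complete {M : Type*} [Monoid M] (E : Set M) (η : M → M × M) : Prop :=
  StronglyMinimal E η ∧ Convergent E η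

section WordLength

variable {M : Type*} [Monoid M] {E : Set M}

theorem wordLength_prod_le {l : List M} (hl : ∀ x ∈ l, x ∈ E) :
    wordLength E l.prod ≤ l.length :=
  Nat.sInf_le ⟨l, hl, rfl, rfl⟩

theorem exists_word_of_wordLength (hgen : IsGenSet E) (m : M) :
    ∃ l : List M, (∀ x ∈ l, x ∈ E) ∧ l.length = wordLength E m ∧ l.prod = m := by
  obtain ⟨l, hl, hp⟩ := hgen m
  exact Nat.sInf_mem (s := {n | ∃ l : List M, (∀ x ∈ l, x ∈ E) ∧ l.length = n ∧ l.prod = m})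
    ⟨l.length, l, hl, rfl, hp⟩

theorem wordLength_one : wordLength E (1 : M) = 0 := by
  simpa using wordLength_prod_le (E := E) (l := []) (by simp)

theorem wordLength_eq_zero_iff (hgen : IsGenSet E) {m : M} : wordLength E m = 0 ↔ m = 1 := by
  refine ⟨fun h => ?_, fun h => h ▸ wordLength_one⟩
  obtain ⟨l, -, hlen, rfl⟩ := exists_word_of_wordLength hgen m
  rw [h, List.length_eq_zero_iff] at hlen
  simp [hlen]

theorem wordLength_mul_le (hgen : IsGenSet E) (a b : M) :
    wordLength E (a * b) ≤ wordLength E a + wordLength E b := by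
  obtain ⟨k, hk, hklen, rfl⟩ := exists_word_of_wordLength hgen a
  obtain ⟨l, hl, hllen, rfl⟩ := exists_word_of_wordLength hgen b
  rw [← hklen, ← hllen, ← List.prod_append, ← List.length_append]
  exact wordLength_prod_le fun x hx => (List.mem_append.1 hx).elim (hk x) (hl x)

theorem wordLength_of_mem (h1 : (1 : M) ∉ E) (hgen : IsGenSet E) {a : M} (ha : a ∈ E) :
    wordLength E a = 1 := by
  have hle : wordLength E a ≤ 1 := by
    simpa using wordLength_prod_le (E := E) (l := [a]) (by simpa using ha)
  have hne : wordLength E a ≠ 0 := fun h =>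
    h1 ((wordLength_eq_zero_iff hgen).1 h ▸ ha)
  omega

theorem mem_of_wordLength_eq_one (hgen : IsGenSet E) {a : M} (ha : wordLength E a = 1) :
    a ∈ E := by
  obtain ⟨l, hl, hlen, rfl⟩ := exists_word_of_wordLength hgen a
  obtain ⟨x, rfl⟩ := List.length_eq_one_iff.1 (hlen.trans ha)
  simpa using hl

end WordLength

section Factorization

variable {M : Type*} [Monoid M] {E : Set M} {η : M → M × M}

theorem IsFactorizationMap.apply_of_mem (hη : IsFactorizationMap E η) (h1 : (1 : M) ∉ E)
    (hgen : IsGenSet E) {a : M} (ha : a ∈ E) : η a = (1, a) := by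
  obtain ⟨hmul, hlen, hmem, -⟩ := hη
  have hsnd := wordLength_of_mem h1 hgen (hmem a fun h => h1 (h ▸ ha))
  have hsum := hlen a
  rw [wordLength_of_mem h1 hgen ha, hsnd] at hsum
  have hfst : (η a).1 = 1 := (wordLength_eq_zero_iff hgen).1 (by omega)
  have hprod := hmul a
  rw [hfst, one_mul] at hprod
  exact Prod.ext hfst hprod

theorem IsFactorizationMap.apply_snd (hη : IsFactorizationMap E η) (h1 : (1 : M) ∉ E)
    (hgen : IsGenSet E) (m : M) : η (η m).2 = (1, (η m).2) := by
  by_cases hm : m = 1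
  · rw [hm, hη.2.2.2, hη.2.2.2]
  · exact hη.apply_of_mem h1 hgen (hη.2.2.1 m hm)

theorem IsFactorizationMap.stable (hη : IsFactorizationMap E η) (m : M) :
    η ((η m).1 * (η m).2) = ((η m).1, (η m).2) := by
  rw [hη.1]

/-- If `(c, d)` and `(d, b)` are stable, then so is `(c * d, b)`. -/
theorem IsFactorable.stable_mul (hfac : IsFactorable E η) (h1 : (1 : M) ∉ E)
    (hgen : IsGenSet E) {c d b : M} (hcd : η (c * d) = (c, d)) (hdb : η (d * b) = (d, b)) :
    η (c * d * b) = (c * d, b) := by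
  obtain ⟨hη, hgraded⟩ := hfac
  have hlen : wordLength E (d * b) = wordLength E d + wordLength E b := by
    simpa [hdb] using hη.2.1 (d * b)
  rcases hgraded (c, d * b, 1) with ⟨-, h⟩ | ⟨-, -, h⟩
  · have hsnd := hη.apply_snd h1 hgen (c * d * b)
    simp only [f1, f2, mul_one, hcd, hdb, ← mul_assoc, hsnd, Prod.mk.injEq] at h
    obtain ⟨hfst, hfst', hb⟩ := h
    refine Prod.ext ?_ hb
    have := hη.1 (η (c * d * b)).1
    rw [hfst, hfst'] at this
    exact this.symm
  · simp [f1, f2, tnorm, hcd, hdb, hlen, wordLength_one] at h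
    omega

/-- Weak factorability, for a stable pair `(c, d)`. -/
theorem IsFactorable.apply_mul_of_geodesic (hfac : IsFactorable E η) (h1 : (1 : M) ∉ E)
    (hgen : IsGenSet E) {c d t : M} (hcd : η (c * d) = (c, d)) (hdt : Geodesic E d t)
    (hc : Geodesic E c (η (d * t)).1) :
    η (c * d * t) = (c * (η (d * t)).1, (η (d * t)).2) := by
  obtain ⟨hη, hgraded⟩ := id hfac
  have hlen := hη.2.1 (d * t)
  have hlen' := hη.2.1 (c * (η (d * t)).1)
  unfold Geodesic at hdt hc
  rcases hgraded (c, d, t) with ⟨h, -⟩ | ⟨-, h, -⟩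
  · simp only [f1, f2, hcd, Prod.mk.injEq] at h
    have := hfac.stable_mul h1 hgen (hη.stable (c * (η (d * t)).1)) h.2
    rwa [hη.1, mul_assoc, hη.1, ← mul_assoc] at this
  · simp only [f1, f2, tnorm, hcd] at h
    omega

/-- If `(m, b)` is stable, then so is `(η′(m), b)`. -/
theorem IsFactorable.stable_snd (hfac : IsFactorable E η) (h1 : (1 : M) ∉ E)
    (hgen : IsGenSet E) {c d b : M} (hcd : η (c * d) = (c, d))
    (hb : η (c * d * b) = (c * d, b)) : η (d * b) = (d, b) := by
  obtain ⟨hη, hgraded⟩ := id hfac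
  have hlen_cd : wordLength E (c * d) = wordLength E c + wordLength E d := by
    simpa [hcd] using hη.2.1 (c * d)
  have hlen_cdb : wordLength E (c * d * b) = wordLength E (c * d) + wordLength E b := by
    simpa [hb] using hη.2.1 (c * d * b)
  have hlen_db := hη.2.1 (d * b)
  have hle_db := wordLength_mul_le hgen d b
  have hle := wordLength_mul_le hgen c (η (d * b)).1
  have hprod : c * (η (d * b)).1 * (η (d * b)).2 = c * d * b := by
    rw [mul_assoc, hη.1, ← mul_assoc]
  have hle' := wordLength_mul_le hgen (c * (η (d * b)).1) (η (d * b)).2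
  have hle_cdb := wordLength_mul_le hgen c (d * b)
  rw [hprod] at hle'
  rw [← mul_assoc] at hle_cdb
  have key := hfac.apply_mul_of_geodesic h1 hgen hcd
    (t := b) (by unfold Geodesic; omega) (by unfold Geodesic; omega)
  rw [hb, Prod.mk.injEq] at key
  rcases hgraded (c, d, b) with ⟨h, -⟩ | ⟨-, h, -⟩
  · simpa [f1, f2, hcd, ← key.1, ← key.2] using h
  · simp [f1, f2, tnorm, hcd, ← key.1, ← key.2] at h

end Factorization

section NormalForm

variable {M : Type*} [Monoid M] {E : Set M} {η : M → M × M}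

/-- A word over `E` is a normal form if every nonempty prefix splits off its last letter
as prescribed by `η`. -/
def IsNormalForm (E : Set M) (η : M → M × M) (w : List M) : Prop :=
  (∀ a ∈ w, a ∈ E) ∧ ∀ u a, u ++ [a] <+: w → η (u.prod * a) = (u.prod, a)

theorem isNormalForm_nil : IsNormalForm E η [] :=
  ⟨by simp, by simp⟩

theorem IsNormalForm.of_prefix {w z : List M} (hw : IsNormalForm E η w) (hz : z <+: w) :
    IsNormalForm E η z :=
  ⟨fun a ha => hw.1 a (hz.subset ha), fun u a h => hw.2 u a (h.trans hz)⟩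

theorem isNormalForm_concat {w : List M} {a : M} : IsNormalForm E η (w ++ [a]) ↔
    IsNormalForm E η w ∧ a ∈ E ∧ η (w.prod * a) = (w.prod, a) := by
  refine ⟨fun h => ⟨h.of_prefix (List.prefix_append _ _), h.1 a (by simp),
    h.2 w a List.prefix_rfl⟩, fun ⟨hw, ha, hstable⟩ => ⟨?_, fun u b hu => ?_⟩⟩
  · intro b hb
    rcases List.mem_append.1 hb with hb | hb
    · exact hw.1 b hb
    · rwa [List.mem_singleton.1 hb]
  · rcases List.prefix_concat_iff.1 hu with h | h
    · obtain ⟨rfl, hab⟩ := List.append_inj' h rfl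
      obtain rfl : b = a := by simpa using hab
      exact hstable
    · exact hw.2 u b h

theorem IsNormalForm.length_eq (h1 : (1 : M) ∉ E) (hgen : IsGenSet E)
    (hη : IsFactorizationMap E η) {w : List M} (hw : IsNormalForm E η w) :
    w.length = wordLength E w.prod := by
  induction w using List.reverseRecOn with
  | nil => simp [wordLength_one]
  | append_singleton w a ih =>
    obtain ⟨hw', ha, hstable⟩ := isNormalForm_concat.1 hw
    have hlen := hη.2.1 (w.prod * a)
    rw [hstable] at hlen
    simp only [wordLength_of_mem h1 hgen ha] at hlen
    simp [ih hw', hlen]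

theorem IsNormalForm.eq_of_prod_eq (h1 : (1 : M) ∉ E) (hgen : IsGenSet E)
    (hη : IsFactorizationMap E η) {w z : List M} (hw : IsNormalForm E η w)
    (hz : IsNormalForm E η z) (hprod : w.prod = z.prod) : w = z := by
  induction w using List.reverseRecOn generalizing z with
  | nil =>
    have hlen := hz.length_eq h1 hgen hη
    rw [← hprod, List.prod_nil, wordLength_one] at hlen
    exact (List.length_eq_zero_iff.1 hlen).symm
  | append_singleton w a ih =>
    have hlen := hz.length_eq h1 hgen hη
    rw [← hprod, ← hw.length_eq h1 hgen hη] at hlen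
    rcases List.eq_nil_or_concat' z with rfl | ⟨z, b, rfl⟩
    · simp at hlen
    · obtain ⟨hw', -, hwa⟩ := isNormalForm_concat.1 hw
      obtain ⟨hz', -, hzb⟩ := isNormalForm_concat.1 hz
      simp only [List.prod_append, List.prod_singleton] at hprod
      rw [hprod, hzb, Prod.mk.injEq] at hwa
      rw [ih hw' hz' hwa.1.symm, hwa.2]

/-- Appending a letter to a normal form yields a normal form if the last two letters are
stable. -/
theorem IsNormalForm.concat_concat (hfac : IsFactorable E η) (h1 : (1 : M) ∉ E)
    (hgen : IsGenSet E) {w : List M} {x y : M} (hw : IsNormalForm E η (w ++ [x]))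
    (hy : y ∈ E) (hxy : η (x * y) = (x, y)) : IsNormalForm E η (w ++ [x] ++ [y]) := by
  refine isNormalForm_concat.2 ⟨hw, hy, ?_⟩
  simpa using hfac.stable_mul h1 hgen (isNormalForm_concat.1 hw).2.2 hxy

theorem isNormalForm_singleton (hη : IsFactorizationMap E η) (h1 : (1 : M) ∉ E)
    (hgen : IsGenSet E) {a : M} (ha : a ∈ E) : IsNormalForm E η [a] :=
  isNormalForm_concat (w := []).2
    ⟨isNormalForm_nil, ha, by simpa using hη.apply_of_mem h1 hgen ha⟩

theorem IsNormalForm.irr (hfac : IsFactorable E η) (h1 : (1 : M) ∉ E)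
    (hgen : IsGenSet E) {w : List M} (hw : IsNormalForm E η w) : Irr E η w := by
  rintro ⟨-, u, v, x, y, -, -, hxy, rfl, -⟩
  have hu : IsNormalForm E η (u ++ [x] ++ [y]) := hw.of_prefix (by simp)
  obtain ⟨hux, -, hstable⟩ := isNormalForm_concat.1 hu
  refine hxy (hfac.stable_snd h1 hgen (isNormalForm_concat.1 hux).2.2 ?_)
  simpa using hstable

theorem Irr.isNormalForm (hfac : IsFactorable E η) (h1 : (1 : M) ∉ E)
    (hgen : IsGenSet E) {w : List M} (hwE : ∀ a ∈ w, a ∈ E) (hw : Irr E η w) :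
    IsNormalForm E η w := by
  induction w using List.reverseRecOn with
  | nil => exact isNormalForm_nil
  | append_singleton w a ih =>
    have hw' : Irr E η w := by
      rintro ⟨-, u, v, x, y, hx, hy, hxy, rfl, -⟩
      exact hw ⟨_, u, v ++ [a], x, y, hx, hy, hxy, by simp, rfl⟩
    have hnf := ih (fun b hb => hwE b (by simp [hb])) hw'
    have ha : a ∈ E := hwE a (by simp)
    rcases List.eq_nil_or_concat' w with rfl | ⟨w, x, rfl⟩
    · exact isNormalForm_singleton hfac.1 h1 hgen ha
    · refine hnf.concat_concat hfac h1 hgen ha (by_contra fun hxa => hw ?_)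
      exact ⟨_, w, [], x, a, hwE x (by simp), ha, hxa, by simp, rfl⟩

theorem prod_ruleRHS (hη : IsFactorizationMap E η) (x y : M) :
    (ruleRHS η x y).prod = x * y := by
  conv_rhs => rw [← hη.1 (x * y)]
  unfold ruleRHS
  split_ifs <;> simp_all

theorem mem_of_mem_ruleRHS (hη : IsFactorizationMap E η) (h1 : (1 : M) ∉ E)
    (hgen : IsGenSet E) {x y : M} (hx : x ∈ E) (hy : y ∈ E) :
    ∀ a ∈ ruleRHS η x y, a ∈ E := by
  intro a ha
  have hxy : x * y ≠ 1 := by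
    intro h
    simp [ruleRHS, h, hη.2.2.2] at ha
  have hsnd := hη.2.2.1 _ hxy
  have hlen := hη.2.1 (x * y)
  have hle := wordLength_mul_le hgen x y
  rw [wordLength_of_mem h1 hgen hx, wordLength_of_mem h1 hgen hy] at hle
  rw [wordLength_of_mem h1 hgen hsnd] at hlen
  have hfst : (η (x * y)).1 ≠ 1 → (η (x * y)).1 ∈ E := fun hne => by
    have := (wordLength_eq_zero_iff hgen (E := E)).not.2 hne
    exact mem_of_wordLength_eq_one hgen (by omega)
  unfold ruleRHS at ha
  split_ifs at ha <;> simp at ha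
  · exact ha ▸ hsnd
  · exact ha ▸ hfst ‹_›
  · rcases ha with rfl | rfl
    exacts [hfst ‹_›, hsnd]

theorem Step.prod_eq (hη : IsFactorizationMap E η) {w z : List M} (h : Step E η w z) :
    w.prod = z.prod := by
  obtain ⟨u, v, x, y, -, -, -, rfl, rfl⟩ := h
  simp [prod_ruleRHS hη, mul_assoc]

theorem prod_eq_of_eqvGen (hη : IsFactorizationMap E η) {w z : List M}
    (h : Relation.EqvGen (Step E η) w z) : w.prod = z.prod := by
  induction h with
  | rel _ _ h => exact h.prod_eq hη
  | refl => rfl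
  | symm _ _ _ ih => exact ih.symm
  | trans _ _ _ _ _ ih ih' => exact ih.trans ih'

theorem eqvGen_concat {w z : List M} (h : Relation.EqvGen (Step E η) w z) (a : M) :
    Relation.EqvGen (Step E η) (w ++ [a]) (z ++ [a]) := by
  induction h with
  | rel _ _ h =>
    obtain ⟨u, v, x, y, hx, hy, hxy, rfl, rfl⟩ := h
    exact .rel _ _ ⟨u, v ++ [a], x, y, hx, hy, hxy, by simp, by simp⟩
  | refl => exact .refl _
  | symm _ _ _ ih => exact .symm _ _ ih
  | trans _ _ _ _ _ ih ih' => exact .trans _ _ _ ih ih'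

/-- Every word over `E` is equivalent to a normal form. -/
theorem exists_isNormalForm_eqvGen (hfac : IsFactorable E η) (h1 : (1 : M) ∉ E)
    (hgen : IsGenSet E) (w : List M) (hwE : ∀ a ∈ w, a ∈ E) :
    ∃ z, IsNormalForm E η z ∧ Relation.EqvGen (Step E η) w z := by
  have hη := hfac.1
  induction hn : w.length using Nat.strong_induction_on generalizing w with
  | _ n ih =>
  have reduce : ∀ z : List M, (∀ a ∈ z, a ∈ E) → z.length < n →
      Relation.EqvGen (Step E η) w z →
      ∃ z, IsNormalForm E η z ∧ Relation.EqvGen (Step E η) w z := by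
    intro z hzE hz hwz
    obtain ⟨z', hz', hzz'⟩ := ih z.length hz z hzE rfl
    exact ⟨z', hz', .trans _ _ _ hwz hzz'⟩
  have concatE : ∀ (z : List M) (a : M), (∀ b ∈ z, b ∈ E) → a ∈ E → ∀ b ∈ z ++ [a], b ∈ E := by
    intro z a hz ha b hb
    rcases List.mem_append.1 hb with hb | hb
    · exact hz b hb
    · rwa [List.mem_singleton.1 hb]
  rcases List.eq_nil_or_concat' w with rfl | ⟨w, x, rfl⟩
  · exact ⟨[], isNormalForm_nil, .refl _⟩
  have hx : x ∈ E := hwE x (by simp)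
  have hwE' : ∀ a ∈ w, a ∈ E := fun a ha => hwE a (by simp [ha])
  simp only [List.length_append, List.length_singleton] at hn
  obtain ⟨z, hz, hwz⟩ := ih w.length (by omega) w hwE' rfl
  have hwz' := eqvGen_concat hwz x
  have hzlen : z.length ≤ w.length := by
    rw [hz.length_eq h1 hgen hη, ← prod_eq_of_eqvGen hη hwz]
    exact wordLength_prod_le hwE'
  rcases hzlen.lt_or_eq with hlt | hzlen
  · exact reduce _ (concatE z x hz.1 hx) (by simp; omega) hwz'
  rcases List.eq_nil_or_concat' z with rfl | ⟨z, y, rfl⟩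
  · exact ⟨[x], isNormalForm_singleton hη h1 hgen hx, hwz'⟩
  have hy : y ∈ E := hz.1 y (by simp)
  by_cases hyx : η (y * x) = (y, x)
  · exact ⟨_, hz.concat_concat hfac h1 hgen hx hyx, hwz'⟩
  obtain ⟨hz', -, hzy⟩ := isNormalForm_concat.1 hz
  simp only [List.length_append, List.length_singleton] at hzlen
  have hstep : Relation.EqvGen (Step E η) (w ++ [x]) (z ++ ruleRHS η y x) :=
    .trans _ _ _ hwz' (.rel _ _ ⟨z, [], y, x, hy, hx, hyx, by simp, by simp⟩)
  have hrhsE := mem_of_mem_ruleRHS hη h1 hgen hy hx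
  by_cases hshort : (ruleRHS η y x).length < 2
  · refine reduce _ ?_ (by simp; omega) hstep
    intro a ha
    exact (List.mem_append.1 ha).elim (hz'.1 a) (hrhsE a)
  have hrhs : ruleRHS η y x = [(η (y * x)).1, (η (y * x)).2] := by
    unfold ruleRHS at hshort ⊢
    split_ifs at hshort ⊢ <;> simp_all
  rw [hrhs] at hstep hrhsE
  have ha := hrhsE (η (y * x)).1 (by simp)
  have hb := hrhsE (η (y * x)).2 (by simp)
  have hzaE := concatE z _ hz'.1 ha
  obtain ⟨s, hs, hzs⟩ := ih (z.length + 1) (by omega) _ hzaE (by simp)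
  have hstep' := eqvGen_concat hzs (η (y * x)).2
  have hws := Relation.EqvGen.trans _ _ _ (by simpa using hstep) hstep'
  have hsprod := prod_eq_of_eqvGen hη hzs
  simp only [List.prod_append, List.prod_singleton] at hsprod
  have hslen : s.length ≤ z.length + 1 := by
    rw [hs.length_eq h1 hgen hη, ← prod_eq_of_eqvGen hη hzs]
    simpa using wordLength_prod_le hzaE
  rcases hslen.lt_or_eq with hlt | hslen
  · exact reduce _ (concatE s _ hs.1 hb) (by simp; omega) hws
  refine ⟨_, isNormalForm_concat.2 ⟨hs, hb, ?_⟩, hws⟩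
  have hgeo : Geodesic E y x := by
    rw [Geodesic, hη.2.1 (y * x)]
    simp [wordLength_of_mem h1 hgen, hx, hy, ha, hb]
  have hgeo' : Geodesic E z.prod (η (y * x)).1 := by
    rw [Geodesic, hsprod, ← hs.length_eq h1 hgen hη, ← hz'.length_eq h1 hgen hη,
      wordLength_of_mem h1 hgen ha, hslen]
  rw [← hsprod, mul_assoc z.prod, hη.1, ← mul_assoc]
  exact hfac.apply_mul_of_geodesic h1 hgen hzy hgeo hgeo'

theorem stronglyMinimal_of_isFactorizationMap (hη : IsFactorizationMap E η) :
    StronglyMinimal E η := by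
  refine ⟨?_, ?_, ?_⟩
  · rintro s - ⟨-, u, v, x, y, -, -, -, h, -⟩
    have := congrArg List.length h
    simp at this
    omega
  · rintro x - y - - ⟨-, u, v, x', y', -, -, hne, h, -⟩
    refine hne ?_
    have hlen := congrArg List.length h
    unfold ruleRHS at h hlen
    split_ifs at h hlen <;> simp at hlen <;> try omega
    obtain rfl : u = [] := List.length_eq_zero_iff.1 (by omega)
    simp at h
    rw [← h.1, ← h.2.1]
    exact hη.stable _
  · rintro x - y - - ⟨u, v, x', y', -, -, -, hne, h⟩
    have hlen := congrArg List.length h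
    simp at hlen
    obtain rfl : u = [] := List.length_eq_zero_iff.1 (by omega)
    simp at h
    exact hne (by rw [h.1, h.2.1])

end NormalForm

/-- Let `(M, E, η)` be a factorable monoid. Then the rewriting system associated with
`η` is strongly minimal, the evaluation map `E*/↔_R → M` (induced by sending each letter
to itself) is an isomorphism of monoids — i.e. two words over `E` are `↔_R`-equivalent
iff they evaluate to the same element of `M`, and every element of `M` is the value of
some word over `E` — and every `↔_R`-equivalence class of words over `E` contains
exactly one irreducible word. -/
theorem rewritingSystem_of_factorable
    {M : Type*} [Monoid M] (E : Set M) (h1 : (1 : M) ∉ E) (hgen : IsGenSet E)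
    (η : M → M × M) (hfac : IsFactorable E η) :
    StronglyMinimal E η ∧
    (∀ w z : List M, (∀ a ∈ w, a ∈ E) → (∀ a ∈ z, a ∈ E) →
      (Relation.EqvGen (Step E η) w z ↔ w.prod = z.prod)) ∧
    (∀ m : M, ∃ w : List M, (∀ a ∈ w, a ∈ E) ∧ w.prod = m) ∧
    (∀ w : List M, (∀ a ∈ w, a ∈ E) →
      ∃! z : List M, (∀ a ∈ z, a ∈ E) ∧ Relation.EqvGen (Step E η) w z ∧ Irr E η z) := by
  have hη := hfac.1
  refine ⟨stronglyMinimal_of_isFactorizationMap hη,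
    fun w z hw hz => ⟨prod_eq_of_eqvGen hη, fun h => ?_⟩, hgen, fun w hw => ?_⟩
  · obtain ⟨w', hw', hww'⟩ := exists_isNormalForm_eqvGen hfac h1 hgen w hw
    obtain ⟨z', hz', hzz'⟩ := exists_isNormalForm_eqvGen hfac h1 hgen z hz
    have heq : w' = z' := hw'.eq_of_prod_eq h1 hgen hη hz' <| by
      rw [← prod_eq_of_eqvGen hη hww', ← prod_eq_of_eqvGen hη hzz', h]
    exact .trans _ _ _ hww' (heq ▸ .symm _ _ hzz')
  · obtain ⟨z, hz, hwz⟩ := exists_isNormalForm_eqvGen hfac h1 hgen w hw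
    refine ⟨z, ⟨hz.1, hwz, hz.irr hfac h1 hgen⟩, ?_⟩
    rintro s ⟨hsE, hws, hs⟩
    refine (hs.isNormalForm hfac h1 hgen hsE).eq_of_prod_eq h1 hgen hη hz ?_
    rw [← prod_eq_of_eqvGen hη hws, prod_eq_of_eqvGen hη hwz]
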